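/- Let N ≥ 1 and m ≥ 2 be integers. On ℝ^{1+m} with coordinates (t, u¹, …, u^m), consider the smooth vector fields: ∂_t; t∂_t; t²∂_t + N t Σ_{a=1}^m u^a ∂_{u^a}; u^a ∂_{u^b} for all 1 ≤ a, b ≤ m; and t^k ∂_{u^a} for all 0 ≤ k ≤ N, 1 ≤ a ≤ m. These m² + (N+1)m + 3 vector fields are linearly independent over ℝ and their real span is closed under the Lie bracket of vector fields; hence they span a Lie subalgebra of the Lie algebra of smooth vector fields on ℝ^{1+m} of dimension m² + (N+1)m + 3. -/

import Mathlib

/-- The Lie bracket of vector fields on a real normed space: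
`[X,Y](p) = DY(p)(X(p)) − DX(p)(Y(p))`. -/
noncomputable def vbracket {E : Type*} [NormedAddCommGroup E] [NormedSpace ℝ E]
    (X Y : E → E) : E → E :=
  fun p => fderiv ℝ Y p (X p) - fderiv ℝ X p (Y p)

/-!
Write `t` for coordinate `0` and `u` for the row vector of the remaining `m` coordinates. The span
consists of the fields `q(t) ∂_t + ((N / 2) q'(t) u + u A + P(t)) ∂_u` with `q` a polynomial of
degree at most `2`, `A` a matrix and `P` a vector of polynomials of degree at most `N`; the weight
`N / 2` separates `sl₂` (the `q`) from `gl_m` (the `A`). Under the bracket `q` acts on `P` by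
`q P' - (N / 2) q' P`, where the terms of degree `N + 1` cancel, and on quadratic polynomials by
the same formula with `N = 2`, so the family is closed. Its parametrization is injective, which
gives the dimension; as this is the number of generators, they are linearly independent.
-/

open Polynomial Matrix

section DegreeLT

variable {R : Type*} [CommRing R] {n : ℕ}

lemma eq_sum_of_mem_degreeLT {q : R[X]} (hq : q ∈ degreeLT R n) :
    q = ∑ k : Fin n, C (q.coeff k) * X ^ (k : ℕ) := by
  rw [sum_fin (fun k a => C a * X ^ k) (by simp) (mem_degreeLT.1 hq), sum_C_mul_X_pow_eq]

lemma sum_C_mul_X_pow_mem_degreeLT (c : Fin n → R) :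
    ∑ k : Fin n, C (c k) * X ^ (k : ℕ) ∈ degreeLT R n := by
  simp_rw [C_mul_X_pow_eq_monomial]
  exact sum_mem fun k _ => monomial_coe_mem_degreeLT k (c k)

/-- The Lie derivative `q P' - s q' P` along the vector field `q ∂_t` of the density
`P (dt)^(-s)`. For `s = 1` it is the bracket of the vector fields `q ∂_t` and `P ∂_t`. -/
noncomputable def densityAction (s : R) (q P : R[X]) : R[X] :=
  q * derivative P - C s * derivative q * P

lemma coeff_densityAction_succ (s : R) {q : R[X]} (hq : q ∈ degreeLT R 3) (P : R[X]) (k : ℕ) :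
    (densityAction s q P).coeff (k + 1) =
      q.coeff 0 * (k + 2) * P.coeff (k + 2) + q.coeff 1 * (k + 1 - s) * P.coeff (k + 1) +
        q.coeff 2 * ((k - 2 * s) * P.coeff k) := by
  rw [densityAction, eq_sum_of_mem_degreeLT hq, Fin.sum_univ_three]
  rcases k with _ | k <;>
    simp [add_mul, mul_assoc, coeff_X_pow_mul', coeff_derivative] <;> ring

lemma densityAction_mem_degreeLT {s : R} (hs : 2 * s = n) {q P : R[X]}
    (hq : q ∈ degreeLT R 3) (hP : P ∈ degreeLT R (n + 1)) :
    densityAction s q P ∈ degreeLT R (n + 1) := by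
  have hP₀ (k : ℕ) (hk : n + 1 ≤ k) : P.coeff k = 0 :=
    (degree_lt_iff_coeff_zero _ _).1 (mem_degreeLT.1 hP) k hk
  have cancel (k : ℕ) (hk : n ≤ k) : ((k : R) - 2 * s) * P.coeff k = 0 := by
    rcases hk.eq_or_lt with rfl | hk
    · rw [hs, sub_self, zero_mul]
    · rw [hP₀ k hk, mul_zero]
  rw [mem_degreeLT, degree_lt_iff_coeff_zero]
  rintro (_ | k) hk
  · omega
  · rw [coeff_densityAction_succ s hq, hP₀ (k + 2) (by omega), hP₀ (k + 1) hk, cancel k (by omega)]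
    ring

end DegreeLT

section AffineField

variable {m : ℕ}

/-- The vector field `q(t) ∂_t + (s q'(t) u + u A + P(t)) ∂_u` on `ℝ^{1+m}`, affine along the
fibres of the projection to `t`, as a linear function of `(q, A, P)`. The matrix acts on the
right, so that the field `u^a ∂_{u^b}` corresponds to the matrix unit with entry `1` at
`(a, b)`. -/
noncomputable def affineField (s : ℝ) :
    ℝ[X] × Matrix (Fin m) (Fin m) ℝ × (Fin m → ℝ[X]) →ₗ[ℝ]
      (Fin (m + 1) → ℝ) → Fin (m + 1) → ℝ where
  toFun x p := Fin.cons (x.1.eval (p 0)) fun b =>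
    s * (derivative x.1).eval (p 0) * p b.succ + (Fin.tail p ᵥ* x.2.1) b + (x.2.2 b).eval (p 0)
  map_add' x y := by
    ext p i
    refine Fin.cases (by simp) (fun b => ?_) i
    simp [vecMul_add]
    ring
  map_smul' c x := by
    ext p i
    refine Fin.cases (by simp) (fun b => ?_) i
    simp [vecMul_smul]
    ring

variable (s : ℝ) (q r : ℝ[X]) (A B : Matrix (Fin m) (Fin m) ℝ) (P Q : Fin m → ℝ[X])
  (p v : Fin (m + 1) → ℝ)

lemma affineField_apply_zero : affineField s (q, A, P) p 0 = q.eval (p 0) :=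
  rfl

lemma affineField_apply_succ (b : Fin m) :
    affineField s (q, A, P) p b.succ =
      s * (derivative q).eval (p 0) * p b.succ + (Fin.tail p ᵥ* A) b + (P b).eval (p 0) :=
  rfl

lemma affineField_injective : Function.Injective (affineField (m := m) s) := by
  rw [← LinearMap.ker_eq_bot, LinearMap.ker_eq_bot']
  rintro ⟨q, A, P⟩ h
  obtain rfl : q = 0 := Polynomial.funext fun t => by
    simpa [affineField_apply_zero] using congr_fun₂ h (Fin.cons t 0) 0
  obtain rfl : P = 0 := _root_.funext fun b => Polynomial.funext fun t => by
    simpa [affineField_apply_succ] using congr_fun₂ h (Fin.cons t 0) b.succ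
  obtain rfl : A = 0 := by
    ext a b
    simpa [affineField_apply_succ] using congr_fun₂ h (Fin.cons 0 (Pi.single a 1)) b.succ
  rfl

lemma hasFDerivAt_eval_apply {ι : Type*} [Finite ι] (i : ι) (p : ι → ℝ) :
    HasFDerivAt (fun p : ι → ℝ => q.eval (p i))
      ((derivative q).eval (p i) • ContinuousLinearMap.proj (R := ℝ) (φ := fun _ => ℝ) i) p := by
  have := Fintype.ofFinite ι
  exact (q.hasDerivAt (p i)).comp_hasFDerivAt (f := fun p : ι → ℝ => p i) p (hasFDerivAt_apply i p)

lemma fderiv_affineField_apply :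
    fderiv ℝ (affineField s (q, A, P)) p v =
      Fin.cons ((derivative q).eval (p 0) * v 0) fun b =>
        s * ((derivative (derivative q)).eval (p 0) * v 0) * p b.succ +
          s * (derivative q).eval (p 0) * v b.succ + (Fin.tail v ᵥ* A) b +
          (derivative (P b)).eval (p 0) * v 0 := by
  have hpoly (r : ℝ[X]) := hasFDerivAt_eval_apply r 0 p
  have hcoord (i : Fin (m + 1)) := hasFDerivAt_apply (𝕜 := ℝ) (F' := fun _ => ℝ) i p
  have hlinear (b : Fin m) := HasFDerivAt.fun_sum (u := Finset.univ) fun (a : Fin m) _ =>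
    (hcoord a.succ).mul_const (A a b)
  have hsucc (b : Fin m) :=
    ((((hpoly (derivative q)).const_mul s).mul (hcoord b.succ)).add (hlinear b)).add (hpoly (P b))
  have h : HasFDerivAt (affineField s (q, A, P)) _ p :=
    (hpoly q).finCons (hasFDerivAt_pi.2 hsucc)
  rw [h.fderiv]
  ext i
  refine Fin.cases (by simp) (fun b => ?_) i
  simp [vecMul, dotProduct, Fin.tail, mul_comm]
  ring

lemma tail_affineField_vecMul (b : Fin m) :
    (Fin.tail (affineField s (q, A, P) p) ᵥ* B) b =
      s * (derivative q).eval (p 0) * (Fin.tail p ᵥ* B) b + (Fin.tail p ᵥ* (A * B)) b +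
        ∑ a, B a b * (P a).eval (p 0) := by
  have htail : Fin.tail (affineField s (q, A, P) p) =
      (s * (derivative q).eval (p 0)) • Fin.tail p + Fin.tail p ᵥ* A +
        fun a => (P a).eval (p 0) := rfl
  rw [htail, add_vecMul, add_vecMul, smul_vecMul, vecMul_vecMul]
  simp [vecMul, dotProduct, mul_comm]

lemma vbracket_affineField :
    vbracket (affineField s (q, A, P)) (affineField s (r, B, Q)) =
      affineField s (densityAction 1 q r, A * B - B * A, fun b =>
        densityAction s q (Q b) - densityAction s r (P b) +
          ∑ a, (B a b • P a - A a b • Q a)) := by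
  ext p i
  simp only [vbracket, Pi.sub_apply, fderiv_affineField_apply]
  refine Fin.cases ?_ (fun b => ?_) i
  · simp [affineField_apply_zero, densityAction]
    ring
  · simp [affineField_apply_zero, affineField_apply_succ, densityAction,
      tail_affineField_vecMul, vecMul_sub, eval_finsetSum]
    ring

end AffineField

section SymmetryAlgebra

variable {N m : ℕ}

/-- All `affineField`s of weight `N / 2` with `q` of degree at most `2` and `P` of degree at most
`N`. For `N ≥ 2` it is the point symmetry algebra of the equation `𝐮^{(N+1)} = 0` in `m` dependent
variables. -/
noncomputable def symmetryAlgebra (N m : ℕ) : Submodule ℝ ((Fin (m + 1) → ℝ) → Fin (m + 1) → ℝ) :=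
  LinearMap.range (affineField (m := m) (N / 2) ∘ₗ
    (degreeLT ℝ 3).subtype.prodMap
      (LinearMap.id.prodMap ((degreeLT ℝ (N + 1)).subtype.compLeft (Fin m))))

lemma mem_symmetryAlgebra {V : (Fin (m + 1) → ℝ) → Fin (m + 1) → ℝ} :
    V ∈ symmetryAlgebra N m ↔ ∃ q ∈ degreeLT ℝ 3, ∃ A : Matrix (Fin m) (Fin m) ℝ,
      ∃ P : Fin m → ℝ[X], (∀ b, P b ∈ degreeLT ℝ (N + 1)) ∧ affineField (N / 2) (q, A, P) = V := by
  constructor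
  · rintro ⟨⟨q, A, P⟩, rfl⟩
    exact ⟨q, q.2, A, fun b => P b, fun b => (P b).2, rfl⟩
  · rintro ⟨q, hq, A, P, hP, rfl⟩
    exact ⟨(⟨q, hq⟩, A, fun b => ⟨P b, hP b⟩), rfl⟩

lemma vbracket_mem_symmetryAlgebra {V W : (Fin (m + 1) → ℝ) → Fin (m + 1) → ℝ}
    (hV : V ∈ symmetryAlgebra N m) (hW : W ∈ symmetryAlgebra N m) :
    vbracket V W ∈ symmetryAlgebra N m := by
  obtain ⟨q, hq, A, P, hP, rfl⟩ := mem_symmetryAlgebra.1 hV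
  obtain ⟨r, hr, B, Q, hQ, rfl⟩ := mem_symmetryAlgebra.1 hW
  have weight : 2 * (N / 2 : ℝ) = N := by ring
  have hqr : densityAction 1 q r ∈ degreeLT ℝ 3 :=
    densityAction_mem_degreeLT (n := 2) (by norm_num) hq hr
  refine mem_symmetryAlgebra.2
    ⟨_, hqr, _, _, fun b => ?_, (vbracket_affineField _ q r A B P Q).symm⟩
  refine add_mem (sub_mem ?_ ?_) (sum_mem fun a _ => sub_mem ?_ ?_)
  · exact densityAction_mem_degreeLT weight hq (hQ b)
  · exact densityAction_mem_degreeLT weight hr (hP b)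
  · exact Submodule.smul_mem _ _ (hP a)
  · exact Submodule.smul_mem _ _ (hQ a)

lemma finrank_symmetryAlgebra :
    Module.finrank ℝ (symmetryAlgebra N m) = m ^ 2 + (N + 1) * m + 3 := by
  have finrank_degreeLT (n : ℕ) : Module.finrank ℝ (degreeLT ℝ n) = n := by
    rw [(degreeLTEquiv ℝ n).finrank_eq, Module.finrank_fin_fun]
  have (n : ℕ) : Module.Finite ℝ (degreeLT ℝ n) := .equiv (degreeLTEquiv ℝ n).symm
  rw [symmetryAlgebra, LinearMap.finrank_range_of_inj]
  · simp [Module.finrank_matrix, Module.finrank_pi_fintype, finrank_degreeLT]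
    ring
  · simp only [LinearMap.coe_comp, LinearMap.coe_prodMap]
    exact (affineField_injective _).comp (Subtype.val_injective.prodMap
      (Function.injective_id.prodMap Subtype.val_injective.comp_left))

/-- The vector fields `∂_t`, `t ∂_t`, `t² ∂_t + N t Σ u^a ∂_{u^a}`; `u^a ∂_{u^b}` at index
`(a, b)`; and `t^k ∂_{u^a}` at index `(k, a)`, a basis of `symmetryAlgebra N m`. -/
def symmetryGenerator (N m : ℕ) : Fin 3 ⊕ (Fin m × Fin m) ⊕ (Fin (N + 1) × Fin m) →
    (Fin (m + 1) → ℝ) → Fin (m + 1) → ℝ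
  | .inl 0 => fun _ => Pi.single 0 1
  | .inl 1 => fun p => Pi.single 0 (p 0)
  | .inl 2 => fun p j => if j = 0 then p 0 ^ 2 else N * p 0 * p j
  | .inr (.inl (a, b)) => fun p => Pi.single b.succ (p a.succ)
  | .inr (.inr (k, a)) => fun p => Pi.single a.succ (p 0 ^ (k : ℕ))

-- The multiple of the identity matrix removes the term `(N / 2) u ∂_u` that `affineField` adds to
-- the generator `t ∂_t`.
lemma sum_smul_symmetryGenerator (c : Fin 3 ⊕ (Fin m × Fin m) ⊕ (Fin (N + 1) × Fin m) → ℝ) :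
    ∑ i, c i • symmetryGenerator N m i =
      affineField (N / 2) (∑ i : Fin 3, C (c (.inl i)) * X ^ (i : ℕ),
        (Matrix.of fun a b => c (.inr (.inl (a, b)))) - (N / 2 * c (.inl 1)) • 1,
        fun a => ∑ k : Fin (N + 1), C (c (.inr (.inr (k, a)))) * X ^ (k : ℕ)) := by
  ext p j
  refine Fin.cases ?_ (fun b => ?_) j
  · simp [Fintype.sum_sum_type, Fin.sum_univ_three, symmetryGenerator, affineField_apply_zero]
  · simp [Fintype.sum_sum_type, Fintype.sum_prod_type, Fin.sum_univ_three, symmetryGenerator,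
      affineField_apply_succ, eval_finsetSum, vecMul_sub, vecMul_smul, Pi.single_apply]
    simp [vecMul, dotProduct, Fin.tail, mul_comm]
    ring

lemma span_symmetryGenerator :
    Submodule.span ℝ (Set.range (symmetryGenerator N m)) = symmetryAlgebra N m := by
  ext V
  rw [Submodule.mem_span_range_iff_exists_fun, mem_symmetryAlgebra]
  constructor
  · rintro ⟨c, rfl⟩
    exact ⟨_, sum_C_mul_X_pow_mem_degreeLT _, _, _, fun _ => sum_C_mul_X_pow_mem_degreeLT _,
      (sum_smul_symmetryGenerator c).symm⟩
  · rintro ⟨q, hq, A, P, hP, rfl⟩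
    let A' := A + (N / 2 * q.coeff 1) • (1 : Matrix (Fin m) (Fin m) ℝ)
    use Sum.elim (fun i => q.coeff i)
      (Sum.elim (fun ab => A' ab.1 ab.2) fun ka => (P ka.2).coeff ka.1)
    rw [sum_smul_symmetryGenerator]
    congr
    · exact (eq_sum_of_mem_degreeLT hq).symm
    · ext a b
      simp [A']
    · exact _root_.funext fun a => (eq_sum_of_mem_degreeLT (hP a)).symm

lemma linearIndependent_symmetryGenerator : LinearIndependent ℝ (symmetryGenerator N m) := by
  rw [linearIndependent_iff_card_eq_finrank_span, Set.finrank, span_symmetryGenerator,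
    finrank_symmetryAlgebra]
  simp
  ring

end SymmetryAlgebra

theorem stmt9_general (N m : ℕ) :
    LinearIndependent ℝ (symmetryGenerator N m) ∧
    (∀ X ∈ Submodule.span ℝ (Set.range (symmetryGenerator N m)),
      ∀ Y ∈ Submodule.span ℝ (Set.range (symmetryGenerator N m)),
        vbracket X Y ∈ Submodule.span ℝ (Set.range (symmetryGenerator N m))) ∧
    Module.finrank ℝ (Submodule.span ℝ (Set.range (symmetryGenerator N m))) =
      m ^ 2 + (N + 1) * m + 3 := by
  rw [span_symmetryGenerator]
  exact ⟨linearIndependent_symmetryGenerator, fun _ hX _ hY => vbracket_mem_symmetryAlgebra hX hY,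
    finrank_symmetryAlgebra⟩

/-- The `m² + (N+1)m + 3` vector fields `∂_t, t∂_t, t²∂_t + Nt Σ u^a∂_{u^a}, u^a∂_{u^b},
t^k∂_{u^a} (0 ≤ k ≤ N)` on `ℝ^{1+m}` are linearly independent and span a Lie algebra of
vector fields of dimension `m² + (N+1)m + 3`. -/
theorem stmt9 (N m : ℕ) (hN : 1 ≤ N) (hm : 2 ≤ m)
    (V : (Fin 3 ⊕ (Fin m × Fin m) ⊕ (Fin (N + 1) × Fin m)) →
      ((Fin (m + 1) → ℝ) → (Fin (m + 1) → ℝ)))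
    (hV0 : V (Sum.inl 0) = fun _ => Pi.single (0 : Fin (m + 1)) 1)
    (hV1 : V (Sum.inl 1) = fun p => Pi.single (0 : Fin (m + 1)) (p 0))
    (hV2 : V (Sum.inl 2) = fun p j => if j = 0 then (p 0) ^ 2 else (N : ℝ) * p 0 * p j)
    (hVab : ∀ a b : Fin m, V (Sum.inr (Sum.inl (a, b))) =
      fun p => Pi.single b.succ (p a.succ))
    (hVka : ∀ (k : Fin (N + 1)) (a : Fin m), V (Sum.inr (Sum.inr (k, a))) =
      fun p => Pi.single a.succ ((p 0) ^ (k : ℕ))) :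
    LinearIndependent ℝ V ∧
    (∀ X ∈ Submodule.span ℝ (Set.range V), ∀ Y ∈ Submodule.span ℝ (Set.range V),
      vbracket X Y ∈ Submodule.span ℝ (Set.range V)) ∧
    Module.finrank ℝ (Submodule.span ℝ (Set.range V)) = m ^ 2 + (N + 1) * m + 3 := by
  obtain rfl : V = symmetryGenerator N m := by
    funext i
    rcases i with i | ⟨a, b⟩ | ⟨k, a⟩
    · fin_cases i
      exacts [hV0, hV1, hV2]
    · exact hVab a b
    · exact hVka k a
  exact stmt9_general N m
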